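/- arXiv:math/0601188 — 5 statements merged into one kernel-verified Lean document; each statement's English description precedes it below -/
import Mathlib

section
/- Let f ∈ C₀(ℝ, ℂ) with f ≠ 0. Then the smallest norm-closed star-subalgebra of C₀(ℝ, ℂ) containing every translate x ↦ f(x − t) of f (for all t ∈ ℝ) is equal to C₀(ℝ, ℂ). -/
open ZeroAtInfty

/-- Extension of a `C₀` function to the one-point compactification. -/
noncomputable def extC0 (a : C₀(ℝ, ℂ)) : C(OnePoint ℝ, ℂ) :=
  OnePoint.continuousMapMk a.toContinuousMap 0 (by
    rw [Filter.coclosedCompact_eq_cocompact]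
    exact a.zero_at_infty')

lemma extC0_coe (a : C₀(ℝ, ℂ)) (x : ℝ) : extC0 a (x : OnePoint ℝ) = a x := rfl

lemma extC0_infty (a : C₀(ℝ, ℂ)) : extC0 a OnePoint.infty = 0 := rfl

/-- Functions on the one-point compactification which are of the form `a + c` with `a ∈ A`. -/
noncomputable def unitizeSub (A : NonUnitalStarSubalgebra ℂ C₀(ℝ, ℂ)) :
    StarSubalgebra ℂ C(OnePoint ℝ, ℂ) where
  carrier := {F | ∃ a ∈ A, ∀ x : ℝ, F (x : OnePoint ℝ) = a x + F OnePoint.infty}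
  mul_mem' := by
    rintro F G ⟨a, ha, hF⟩ ⟨b, hb, hG⟩
    refine ⟨a * b + (F OnePoint.infty) • b + (G OnePoint.infty) • a,
      add_mem (add_mem (mul_mem ha hb) (SMulMemClass.smul_mem _ hb))
        (SMulMemClass.smul_mem _ ha), fun x => ?_⟩
    simp [hF, hG]
    ring
  add_mem' := by
    rintro F G ⟨a, ha, hF⟩ ⟨b, hb, hG⟩
    refine ⟨a + b, add_mem ha hb, fun x => ?_⟩
    simp [hF, hG]
    ring
  algebraMap_mem' := fun r => ⟨0, zero_mem _, fun x => by simp⟩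
  star_mem' := by
    rintro F ⟨a, ha, hF⟩
    refine ⟨star a, star_mem ha, fun x => ?_⟩
    simp [hF]

lemma extC0_mem {A : NonUnitalStarSubalgebra ℂ C₀(ℝ, ℂ)} {a : C₀(ℝ, ℂ)} (ha : a ∈ A) :
    extC0 a ∈ unitizeSub A :=
  ⟨a, ha, fun x => by rw [extC0_infty, extC0_coe, add_zero]⟩

/-- Stone–Weierstrass for `C₀(ℝ, ℂ)`. -/
lemma closure_eq_top_of_sep (A : NonUnitalStarSubalgebra ℂ C₀(ℝ, ℂ))
    (hsep : ∀ x y : ℝ, x ≠ y → ∃ a ∈ A, a x ≠ a y) (hne : ∀ x : ℝ, ∃ a ∈ A, a x ≠ 0) :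
    A.topologicalClosure = ⊤ := by
  have key : (unitizeSub A).topologicalClosure = ⊤ := by
    apply ContinuousMap.starSubalgebra_topologicalClosure_eq_top_of_separatesPoints
    intro x y hxy
    induction x using OnePoint.rec with
    | infty =>
      induction y using OnePoint.rec with
      | infty => exact absurd rfl hxy
      | coe y =>
        obtain ⟨a, ha, h⟩ := hne y
        exact ⟨_, ⟨extC0 a, extC0_mem ha, rfl⟩, Ne.symm h⟩
    | coe x =>
      induction y using OnePoint.rec with
      | infty =>
        obtain ⟨a, ha, h⟩ := hne x
        exact ⟨_, ⟨extC0 a, extC0_mem ha, rfl⟩, h⟩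
      | coe y =>
        obtain ⟨a, ha, h⟩ := hsep x y (fun h => hxy (by rw [h]))
        exact ⟨_, ⟨extC0 a, extC0_mem ha, rfl⟩, h⟩
  rw [NonUnitalStarAlgebra.eq_top_iff]
  intro g
  change g ∈ closure (A : Set C₀(ℝ, ℂ))
  rw [Metric.mem_closure_iff]
  intro ε hε
  have hg : extC0 g ∈ closure (unitizeSub A : Set C(OnePoint ℝ, ℂ)) := by
    have : extC0 g ∈ (unitizeSub A).topologicalClosure := by rw [key]; trivial
    exact this
  obtain ⟨F, ⟨a, ha, hF⟩, hd⟩ := Metric.mem_closure_iff.1 hg (ε / 3) (by positivity)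
  refine ⟨a, ha, ?_⟩
  have h1 : ‖F OnePoint.infty‖ < ε / 3 := by
    have := (ContinuousMap.dist_apply_le_dist (f := extC0 g) (g := F) OnePoint.infty).trans_lt hd
    rwa [extC0_infty, dist_zero_left] at this
  have h2 : dist g a ≤ 2 * ε / 3 := by
    rw [← ZeroAtInftyContinuousMap.dist_toBCF_eq_dist,
      BoundedContinuousFunction.dist_le (by positivity)]
    intro x
    have := (ContinuousMap.dist_apply_le_dist (f := extC0 g) (g := F) (x : OnePoint ℝ)).trans_lt hd
    rw [extC0_coe, hF, dist_eq_norm] at this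
    change dist (g x) (a x) ≤ _
    rw [dist_eq_norm]
    have e : g x - a x = (g x - (a x + F OnePoint.infty)) + F OnePoint.infty := by ring
    rw [e]
    refine (norm_add_le _ _).trans ?_
    linarith
  linarith

/-- The translate of `f`. -/
noncomputable def transC0 (f : C₀(ℝ, ℂ)) (t : ℝ) : C₀(ℝ, ℂ) where
  toFun x := f (x - t)
  continuous_toFun := by fun_prop
  zero_at_infty' := f.zero_at_infty'.comp
    (Homeomorph.subRight t).isClosedEmbedding.tendsto_cocompact

lemma periodic_zero (f : C₀(ℝ, ℂ)) (d : ℝ) (hd : d ≠ 0) (h : Function.Periodic f d) : f = 0 := by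
  ext x
  have h1 : Filter.Tendsto (fun n : ℕ => x + n * d) Filter.atTop (Filter.cocompact ℝ) := by
    rw [← Metric.cobounded_eq_cocompact, ← tendsto_norm_atTop_iff_cobounded]
    refine Filter.tendsto_atTop_mono (f := fun n : ℕ => (n : ℝ) * |d| - |x|) (fun n => ?_) ?_
    · have := norm_sub_le (x + n * d) x
      rw [add_sub_cancel_left, norm_mul] at this
      simp only [Real.norm_eq_abs, Nat.abs_cast] at this ⊢
      linarith
    · exact Filter.tendsto_atTop_add_const_right _ _
        (tendsto_natCast_atTop_atTop.atTop_mul_const (abs_pos.2 hd))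
  have h2 := f.zero_at_infty'.comp h1
  have h3 : Filter.Tendsto (fun _ : ℕ => f x) Filter.atTop (nhds 0) :=
    h2.congr fun n => h.nat_mul n x
  exact tendsto_nhds_unique tendsto_const_nhds h3

/-- For a nonzero `f ∈ C₀(ℝ, ℂ)`, the smallest norm-closed star-subalgebra of
`C₀(ℝ, ℂ)` containing all the translates `x ↦ f (x - t)` of `f` is all of `C₀(ℝ, ℂ)`. -/
theorem stmt1 (f : C₀(ℝ, ℂ)) (hf : f ≠ 0) :
    (NonUnitalStarAlgebra.adjoin ℂ
        {g : C₀(ℝ, ℂ) | ∃ t : ℝ, ∀ x : ℝ, g x = f (x - t)}).topologicalClosure = ⊤ := by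
  have hmem : ∀ t, transC0 f t ∈ NonUnitalStarAlgebra.adjoin ℂ
      {g : C₀(ℝ, ℂ) | ∃ t : ℝ, ∀ x : ℝ, g x = f (x - t)} := fun t =>
    NonUnitalStarAlgebra.subset_adjoin ℂ _ ⟨t, fun _ => rfl⟩
  apply closure_eq_top_of_sep
  · intro x y hxy
    by_contra! hcon
    refine hf (periodic_zero f (x - y) (sub_ne_zero.2 hxy) fun z => ?_)
    have : f (x - (y - z)) = f (y - (y - z)) := hcon _ (hmem (y - z))
    rw [sub_sub_cancel] at this
    rw [← this]
    congr 1
    ring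
  · intro x
    by_contra! hcon
    apply hf
    ext z
    have : f (x - (x - z)) = 0 := hcon _ (hmem (x - z))
    rwa [sub_sub_cancel] at this
end

section
/- Let (X, μ) be a probability space and γ an invertible measure-preserving transformation of (X, μ), and let σ be the induced flow on ([0,1) × X, λ ⊗ μ). Then: (i) if γ is ergodic, the flow σ is ergodic, i.e. every measurable set A ⊆ [0,1) × X satisfying (λ ⊗ μ)(σ_t⁻¹(A) Δ A) = 0 for all t ∈ ℝ has (λ ⊗ μ)(A) = 0 or (λ ⊗ μ)(A) = 1; (ii) if γ is free, i.e. for every integer n ≠ 0 the set {x ∈ X : γⁿ(x) = x} is μ-null, then the flow σ is free: for every real t ≠ 0 the set {(s, x) ∈ [0,1) × X : σ_t(s, x) = (s, x)} is (λ ⊗ μ)-null. -/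
open MeasureTheory Filter Set Topology

/-- The flow on `[0,1) × X` induced by an invertible transformation `γ` of `X`:
`σ_t (s, x) = ({s + t}, γ^⌊s + t⌋ x)`. -/
noncomputable def indFlow {X : Type*} (γ : Equiv.Perm X) (t : ℝ) : ℝ × X → ℝ × X :=
  fun p => (Int.fract (p.1 + t), (γ ^ ⌊p.1 + t⌋) p.2)

/-- The suspension map is jointly measurable. -/
lemma measurable_suspension {X : Type*} [MeasurableSpace X] (γ : Equiv.Perm X)
    (h : Measurable γ) (h' : Measurable ⇑γ.symm) :
    Measurable (fun p : ℝ × X => ((Int.fract p.1, (γ ^ ⌊p.1⌋) p.2) : ℝ × X)) := by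
  have hn : ∀ n : ℕ, Measurable ⇑(γ ^ n) := by
    intro n
    rw [Equiv.Perm.coe_pow]
    exact h.iterate n
  have hn' : ∀ n : ℕ, Measurable ⇑((γ⁻¹) ^ n) := by
    intro n
    rw [Equiv.Perm.coe_pow]
    exact Measurable.iterate h' n
  have hz : ∀ n : ℤ, Measurable ⇑(γ ^ n) := by
    intro n
    cases n with
    | ofNat n => simpa using hn n
    | negSucc n =>
      rw [zpow_negSucc, ← inv_pow]
      exact hn' (n + 1)
  have hF : Measurable (fun q : ℤ × X => (γ ^ q.1) q.2) :=
    measurable_from_prod_countable_right hz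
  have h1 : Measurable (fun p : ℝ × X => ((⌊p.1⌋, p.2) : ℤ × X)) :=
    (Int.measurable_floor.comp measurable_fst).prodMk measurable_snd
  exact (measurable_fract.comp measurable_fst).prodMk (hF.comp h1)

/-- For an invertible measure-preserving transformation `γ` of a probability
space `(X, μ)` with induced flow `σ` on `([0,1) × X, λ ⊗ μ)`:
(i) if `γ` is ergodic then the flow `σ` is ergodic, and
(ii) if `γ` is free then the flow `σ` is free. -/
theorem stmt6 {X : Type*} [MeasurableSpace X] (μ : Measure X) [IsProbabilityMeasure μ]
    (γ : Equiv.Perm X) (hγ : MeasurePreserving γ μ μ) (hγ' : Measurable ⇑γ.symm) :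
    ((∀ B : Set X, MeasurableSet B → μ (symmDiff (⇑γ ⁻¹' B) B) = 0 → μ B = 0 ∨ μ B = 1) →
      ∀ A : Set (ℝ × X), MeasurableSet A →
        (∀ t : ℝ, ((volume.restrict (Ico (0:ℝ) 1)).prod μ)
            (symmDiff (indFlow γ t ⁻¹' A) A) = 0) →
        ((volume.restrict (Ico (0:ℝ) 1)).prod μ) A = 0 ∨
          ((volume.restrict (Ico (0:ℝ) 1)).prod μ) A = 1) ∧
    ((∀ n : ℤ, n ≠ 0 → μ {x : X | (γ ^ n) x = x} = 0) →
      ∀ t : ℝ, t ≠ 0 →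
        ((volume.restrict (Ico (0:ℝ) 1)).prod μ) {p : ℝ × X | indFlow γ t p = p} = 0) := by
  constructor
  · intro herg A hA hinv
    have hprob : IsProbabilityMeasure (volume.restrict (Ico (0:ℝ) 1)) := ⟨by simp⟩
    set ν := volume.restrict (Ico (0:ℝ) 1) with hν
    have hνr : ∀ᵐ r ∂ν, r ∈ Ico (0:ℝ) 1 := ae_restrict_mem measurableSet_Ico
    have hG := measurable_suspension γ hγ.measurable hγ'
    set G : ℝ × X → ℝ × X := fun p => (Int.fract p.1, (γ ^ ⌊p.1⌋) p.2) with hGdef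
    have hGA : MeasurableSet (G ⁻¹' A) := hG hA
    have h1 : ∀ t : ℝ, ∀ᵐ p ∂(ν.prod μ), (G (p.1 + t, p.2) ∈ A ↔ p ∈ A) := by
      intro t
      have := measure_symmDiff_eq_zero_iff.1 (hinv t)
      filter_upwards [this] with p hp
      exact iff_of_eq hp
    have h2 : ∀ᵐ p ∂(ν.prod μ), ∀ᵐ t ∂(volume : Measure ℝ),
        (G (p.1 + t, p.2) ∈ A ↔ p ∈ A) := by
      refine (Measure.ae_ae_comm (μ := (volume : Measure ℝ)) (ν := ν.prod μ)
        (p := fun t p => (G (p.1 + t, p.2) ∈ A ↔ p ∈ A)) ?_).1 (ae_of_all _ h1)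
      have m1 : Measurable (fun q : ℝ × (ℝ × X) => G (q.2.1 + q.1, q.2.2)) :=
        hG.comp (by fun_prop)
      exact (m1 hA).iff (measurable_snd hA)
    obtain ⟨s, hs⟩ := (Measure.ae_ae_of_ae_prod h2).exists
    set B : Set X := {x | (s, x) ∈ A} with hB
    have hBm : MeasurableSet B := measurable_prodMk_left hA
    have h3 : ∀ᵐ x ∂μ, ∀ᵐ r ∂(volume : Measure ℝ), (G (r, x) ∈ A ↔ x ∈ B) := by
      filter_upwards [hs] with x hx
      have := (measurePreserving_add_left (volume : Measure ℝ) (-s)).quasiMeasurePreserving.ae hx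
      filter_upwards [this] with r hr
      have e : s + (-s + r) = r := by ring
      simp only [e] at hr
      exact hr
    have h4 : ∀ᵐ x ∂μ, ∀ᵐ r ∂ν, ((r, x) ∈ A ↔ x ∈ B) := by
      filter_upwards [h3] with x hx
      filter_upwards [ae_restrict_of_ae hx, hνr] with r hr hr'
      have e : G (r, x) = (r, x) := by
        simp [hGdef, Int.fract_eq_self.2 hr', Int.floor_eq_zero_iff.2 hr']
      rwa [e] at hr
    have h5 : ∀ᵐ x ∂μ, ∀ᵐ r ∂ν, ((r, γ x) ∈ A ↔ x ∈ B) := by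
      filter_upwards [h3] with x hx
      have := (measurePreserving_add_right (volume : Measure ℝ) 1).quasiMeasurePreserving.ae hx
      filter_upwards [ae_restrict_of_ae this, hνr] with r hr hr'
      have e : G (r + 1, x) = (r, γ x) := by
        simp [hGdef, Int.fract_eq_self.2 hr', Int.floor_eq_zero_iff.2 hr']
      rwa [e] at hr
    have h6 : ∀ᵐ x ∂μ, (γ x ∈ B ↔ x ∈ B) := by
      filter_upwards [h5, hγ.quasiMeasurePreserving.ae h4] with x hx hx'
      obtain ⟨r, hr, hr'⟩ := (hx.and hx').exists
      exact hr'.symm.trans hr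
    have h7 : ∀ᵐ p ∂(ν.prod μ), (p ∈ A ↔ p.2 ∈ B) := by
      have hm : MeasurableSet {p : ℝ × X | p ∈ A ↔ p.2 ∈ B} := hA.iff (measurable_snd hBm)
      rw [Measure.ae_prod_iff_ae_ae hm]
      refine (Measure.ae_ae_comm (μ := ν) (ν := μ)
        (p := fun r x => ((r, x) ∈ A ↔ x ∈ B)) hm).2 h4
    have h8 : (ν.prod μ) A = μ B := by
      have : A =ᵐ[ν.prod μ] (univ ×ˢ B : Set (ℝ × X)) := by
        filter_upwards [h7] with p hp
        refine propext (hp.trans ?_)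
        show _ ↔ p ∈ (univ ×ˢ B : Set (ℝ × X))
        simp
      rw [measure_congr this, Measure.prod_prod]
      simp
    rw [h8]
    refine herg B hBm (measure_symmDiff_eq_zero_iff.2 ?_)
    filter_upwards [h6] with x hx
    exact propext hx
  · intro hfree t ht
    have hsub : {p : ℝ × X | indFlow γ t p = p} ⊆
        univ ×ˢ (⋃ n : {n : ℤ // n ≠ 0}, {x : X | (γ ^ (n : ℤ)) x = x}) := by
      rintro ⟨s, x⟩ hp
      simp only [indFlow, mem_ofPred_eq, Prod.mk.injEq] at hp
      obtain ⟨ha, hb⟩ := hp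
      refine ⟨mem_univ _, mem_iUnion.2 ⟨⟨⌊s + t⌋, ?_⟩, hb⟩⟩
      intro h0
      rw [Int.fract, h0] at ha
      apply ht
      push_cast at ha
      linarith
    refine measure_mono_null hsub ?_
    have hz : μ (⋃ n : {n : ℤ // n ≠ 0}, {x : X | (γ ^ (n : ℤ)) x = x}) = 0 :=
      measure_iUnion_null (fun n : {n : ℤ // n ≠ 0} => hfree n.1 n.2)
    rw [Measure.prod_prod, hz, mul_zero]
end

section
/- Let r, r' ∈ (0, 1/2] with r ≠ r'. Then the Bernoulli shifts γ_r on (X_r, μ_r) and γ_{r'} on (X_{r'}, μ_{r'}) are not conjugate: there is no measurable map Φ : X_r → X_{r'} such that the pushforward of μ_r under Φ equals μ_{r'}, Φ is injective off a μ_r-null set, Φ(X_r) has full μ_{r'}-measure, and Φ(γ_r(x)) = γ_{r'}(Φ(x)) for μ_r-almost every x. -/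
open MeasureTheory Filter Set Topology

/-- The Bernoulli shift on `{0,1}^ℤ`, as a bijection: `(shiftPerm c) n = c (n + 1)`. -/
def shiftPerm : Equiv.Perm (ℤ → Fin 2) where
  toFun c := fun n => c (n + 1)
  invFun c := fun n => c (n - 1)
  left_inv c := funext fun n => by simp
  right_inv c := funext fun n => by simp

/-- Shannon entropy of a finite-valued random variable. -/
noncomputable def ent {Ω α : Type*} [MeasurableSpace Ω] [Fintype α] (μ : Measure Ω) (X : Ω → α) : ℝ :=
  ∑ a, Real.negMulLog (μ.real (X ⁻¹' {a}))

lemma ent_comp_le {Ω α β : Type*} [MeasurableSpace Ω] [Fintype α] [Fintype β]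
    [MeasurableSpace α] [MeasurableSingletonClass α]
    (μ : Measure Ω) [IsProbabilityMeasure μ] (X : Ω → α) (hX : Measurable X) (f : α → β) :
    ent μ (f ∘ X) ≤ ent μ X := by
  classical
  have hq : ∀ b, μ.real ((f ∘ X) ⁻¹' {b}) = ∑ a with f a = b, μ.real (X ⁻¹' {a}) := by
    intro b
    rw [sum_measureReal_preimage_singleton _ (fun y _ => hX (measurableSet_singleton y))]
    congr 1
    ext x
    simp
  have hle : ∀ a, μ.real (X ⁻¹' {a}) ≤ μ.real ((f ∘ X) ⁻¹' {f a}) := by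
    intro a
    apply measureReal_mono _ (by finiteness)
    intro x hx
    simp only [mem_preimage, mem_singleton_iff, Function.comp_apply] at hx ⊢
    rw [hx]
  unfold ent
  calc ∑ b, Real.negMulLog (μ.real ((f ∘ X) ⁻¹' {b}))
      = ∑ b, ∑ a with f a = b, -(μ.real (X ⁻¹' {a})) * Real.log (μ.real ((f ∘ X) ⁻¹' {f a})) := by
        apply Finset.sum_congr rfl
        intro b _
        rw [Real.negMulLog]
        nth_rewrite 1 [hq]
        rw [← Finset.sum_neg_distrib, Finset.sum_mul]
        apply Finset.sum_congr rfl
        intro a ha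
        rw [(Finset.mem_filter.1 ha).2]
    _ = ∑ a, -(μ.real (X ⁻¹' {a})) * Real.log (μ.real ((f ∘ X) ⁻¹' {f a})) :=
        Finset.sum_fiberwise _ _ _
    _ ≤ _ := by
        apply Finset.sum_le_sum
        intro a _
        rw [Real.negMulLog]
        rcases (measureReal_nonneg (μ := μ) (s := X ⁻¹' {a})).eq_or_lt with h | h
        · simp [← h]
        · have := Real.log_le_log h (hle a)
          nlinarith

lemma ent_factor_le {Ω α β : Type*} [MeasurableSpace Ω] [Fintype α] [Fintype β] [Nonempty β]
    [MeasurableSpace α] [MeasurableSingletonClass α]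
    (μ : Measure Ω) [IsProbabilityMeasure μ] (X : Ω → α) (hX : Measurable X) (Y : Ω → β)
    (h : ∀ x y, X x = X y → Y x = Y y) :
    ent μ Y ≤ ent μ X := by
  obtain ⟨e, rfl⟩ := (Function.factorsThrough_iff (f := X) Y).1 (fun x y hxy => h x y hxy)
  exact ent_comp_le μ X hX e

lemma ent_prod_le {Ω α β : Type*} [MeasurableSpace Ω] [Fintype α] [Fintype β]
    [MeasurableSpace α] [MeasurableSingletonClass α] [MeasurableSpace β] [MeasurableSingletonClass β]
    (μ : Measure Ω) [IsProbabilityMeasure μ] (X : Ω → α) (hX : Measurable X)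
    (Y : Ω → β) (hY : Measurable Y) :
    ent μ (fun ω => (X ω, Y ω)) ≤ ent μ X + ent μ Y := by
  classical
  set p : α → β → ℝ := fun a b => μ.real ((fun ω => (X ω, Y ω)) ⁻¹' {(a, b)}) with hp
  set p1 : α → ℝ := fun a => μ.real (X ⁻¹' {a}) with hp1
  set p2 : β → ℝ := fun a => μ.real (Y ⁻¹' {a}) with hp2
  have hXY : Measurable (fun ω => (X ω, Y ω)) := hX.prodMk hY
  have h1 : ∀ a, p1 a = ∑ b, p a b := by
    intro a
    have := sum_measureReal_preimage_singleton (μ := μ) (({a} : Finset α) ×ˢ (Finset.univ : Finset β))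
      (fun y _ => hXY (measurableSet_singleton y))
    rw [Finset.sum_product, Finset.sum_singleton] at this
    simp only [hp, hp1]
    rw [this]
    congr 1
    ext x; simp [eq_comm]
  have h2 : ∀ b, p2 b = ∑ a, p a b := by
    intro b
    have := sum_measureReal_preimage_singleton (μ := μ) ((Finset.univ : Finset α) ×ˢ ({b} : Finset β))
      (fun y _ => hXY (measurableSet_singleton y))
    rw [Finset.sum_product_right, Finset.sum_singleton] at this
    simp only [hp, hp2]
    rw [this]
    congr 1
    ext x; simp [eq_comm]
  have s1 : ∑ a, p1 a = 1 := by
    simp only [hp1]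
    rw [sum_measureReal_preimage_singleton _ (fun y _ => hX (measurableSet_singleton y))]
    simp
  have s2 : ∑ a, p2 a = 1 := by
    simp only [hp2]
    rw [sum_measureReal_preimage_singleton _ (fun y _ => hY (measurableSet_singleton y))]
    simp
  have hnn : ∀ a b, 0 ≤ p a b := fun a b => measureReal_nonneg
  have e1 : ent μ X = ∑ a, ∑ b, -(p a b) * Real.log (p1 a) := by
    unfold ent
    apply Finset.sum_congr rfl
    intro a _
    rw [← Finset.sum_mul, Finset.sum_neg_distrib, ← h1]; rfl
  have e2 : ent μ Y = ∑ a, ∑ b, -(p a b) * Real.log (p2 b) := by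
    rw [Finset.sum_comm]
    unfold ent
    apply Finset.sum_congr rfl
    intro a _
    rw [← Finset.sum_mul, Finset.sum_neg_distrib, ← h2]; rfl
  have e3 : ent μ (fun ω => (X ω, Y ω)) = ∑ a, ∑ b, Real.negMulLog (p a b) := by
    unfold ent
    rw [Fintype.sum_prod_type]
  have key : ∀ a b, Real.negMulLog (p a b) ≤
      -(p a b) * Real.log (p1 a) + -(p a b) * Real.log (p2 b) + (p1 a * p2 b - p a b) := by
    intro a b
    have q1 : p a b ≤ p1 a := by
      rw [h1]; exact Finset.single_le_sum (f := fun b => p a b) (fun i _ => hnn a i) (Finset.mem_univ b)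
    have q2 : p a b ≤ p2 b := by
      rw [h2]; exact Finset.single_le_sum (f := fun a => p a b) (fun i _ => hnn i b) (Finset.mem_univ a)
    rcases (hnn a b).eq_or_lt with h | h
    · rw [← h] at q1 q2 ⊢
      simp; positivity
    · have p1p : 0 < p1 a := by linarith
      have p2p : 0 < p2 b := by linarith
      have := Real.log_le_sub_one_of_pos (x := p1 a * p2 b / p a b) (by positivity)
      rw [Real.log_div (by positivity) h.ne', Real.log_mul p1p.ne' p2p.ne'] at this
      have := mul_le_mul_of_nonneg_left this h.le
      have h3 : p a b * (p1 a * p2 b / p a b - 1) = p1 a * p2 b - p a b := by field_simp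
      rw [h3] at this
      rw [Real.negMulLog]
      linarith
  have tot : ∑ a, ∑ b, (p1 a * p2 b - p a b) = 0 := by
    simp only [Finset.sum_sub_distrib, ← Finset.mul_sum, s2, mul_one, ← h1, sub_self, Finset.sum_const_zero]
  calc _ = _ := e3
    _ ≤ ∑ a, ∑ b, (-(p a b) * Real.log (p1 a) + -(p a b) * Real.log (p2 b) + (p1 a * p2 b - p a b)) :=
      Finset.sum_le_sum fun a _ => Finset.sum_le_sum fun b _ => key a b
    _ = _ := by
      simp only [Finset.sum_add_distrib, tot, e1, e2, add_zero]

lemma ent_pi_le {Ω : Type*} [MeasurableSpace Ω] (μ : Measure Ω) [IsProbabilityMeasure μ] (c : ℝ) :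
    ∀ (n : ℕ) (X : Fin n → Ω → Fin 2), (∀ i, Measurable (X i)) → (∀ i, ent μ (X i) ≤ c) →
      ent μ (fun ω i => X i ω) ≤ n * c := by
  intro n
  induction n with
  | zero =>
    intro X _ _
    unfold ent
    have : ∀ a, ((fun ω (i : Fin 0) => X i ω) ⁻¹' {a}) = univ := by
      intro a
      ext x; simp [eq_iff_true_of_subsingleton]
    simp [this]
  | succ n ih =>
    intro X hX hc
    have hm : Measurable (fun ω (i : Fin n) => X i.succ ω) := measurable_pi_lambda _ fun i => hX _
    have h1 : ent μ (fun ω i => X i ω) ≤ ent μ (fun ω => (X 0 ω, fun i : Fin n => X i.succ ω)) := by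
      apply ent_factor_le μ _ ((hX 0).prodMk hm)
      intro x y h
      rw [Prod.mk.injEq] at h
      funext i
      refine Fin.cases h.1 (fun j => congrFun h.2 j) i
    have h2 := ent_prod_le μ (X 0) (hX 0) (fun ω (i : Fin n) => X i.succ ω) hm
    have h3 := ih (fun i => X i.succ) (fun i => hX _) (fun i => hc _)
    have := hc 0
    push_cast
    linarith

lemma sum_negMulLog_prod (q : Fin 2 → ℝ) (hq : ∑ a, q a = 1) (n : ℕ) :
    ∑ w : Fin n → Fin 2, Real.negMulLog (∏ i, q (w i)) = n * ∑ a, Real.negMulLog (q a) := by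
  have htot : ∀ n : ℕ, ∑ w : Fin n → Fin 2, ∏ i, q (w i) = 1 := by
    intro n
    rw [← Fintype.prod_sum (fun (_ : Fin n) a => q a)]
    simp [hq]
  induction n with
  | zero => simp
  | succ n ih =>
    rw [← (Fin.consEquiv (fun _ => Fin 2)).sum_comp, Fintype.sum_prod_type]
    simp only [Fin.consEquiv, Equiv.coe_fn_mk, Fin.prod_univ_succ, Fin.cons_zero, Fin.cons_succ,
      Real.negMulLog_mul, Finset.sum_add_distrib, ← Finset.mul_sum, ← Finset.sum_mul, htot, ih]
    rw [hq]
    push_cast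
    ring

lemma measurable_shiftPerm : Measurable (shiftPerm : (ℤ → Fin 2) → (ℤ → Fin 2)) :=
  measurable_pi_lambda _ fun n => measurable_pi_apply (n + 1)

lemma shiftPerm_iterate (n : ℕ) (x : ℤ → Fin 2) (m : ℤ) : (shiftPerm^[n] x) m = x (m + n) := by
  induction n generalizing m with
  | zero => simp
  | succ n ih =>
    rw [Function.iterate_succ_apply']
    change (shiftPerm^[n] x) (m + 1) = _
    rw [ih]
    congr 1
    push_cast
    ring

lemma measure_eq_of_cyl (μ ν : Measure (ℤ → Fin 2)) [IsProbabilityMeasure μ]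
    [IsProbabilityMeasure ν]
    (h : ∀ (s : Finset ℤ) (f : ℤ → Fin 2), μ {x : ℤ → Fin 2 | ∀ i ∈ s, x i = f i} =
      ν {x : ℤ → Fin 2 | ∀ i ∈ s, x i = f i}) : μ = ν := by
  have : ∀ I : Finset ℤ, IsFiniteMeasure (ν.map I.restrict) := fun I => inferInstance
  refine IsProjectiveLimit.unique (P := fun I => ν.map I.restrict) ?_ (fun I => rfl)
  intro I
  refine Measure.ext_of_singleton ?_
  intro w
  rw [Measure.map_apply (by fun_prop) (measurableSet_singleton w),
    Measure.map_apply (by fun_prop) (measurableSet_singleton w)]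
  have : (Finset.restrict (π := fun _ : ℤ => Fin 2) I) ⁻¹' {w} =
      {x : ℤ → Fin 2 | ∀ i ∈ I, x i = (fun j => if hj : j ∈ I then w ⟨j, hj⟩ else 0) i} := by
    ext x
    simp only [mem_preimage, mem_singleton_iff, mem_ofPred_eq, funext_iff, Subtype.forall]
    refine forall₂_congr fun i hi => ?_
    simp [hi]
  rw [this, h]

/-- The cylinder condition. -/
def IsBer (r : ℝ) (μ : Measure (ℤ → Fin 2)) : Prop :=
  ∀ (s : Finset ℤ) (f : ℤ → Fin 2),
      μ {x : ℤ → Fin 2 | ∀ i ∈ s, x i = f i} =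
        ∏ i ∈ s, (if f i = 0 then ENNReal.ofReal r else ENNReal.ofReal (1 - r))

lemma IsBer.mp {r : ℝ} {μ : Measure (ℤ → Fin 2)} [IsProbabilityMeasure μ] (h : IsBer r μ) :
    MeasurePreserving shiftPerm μ μ := by
  refine ⟨measurable_shiftPerm, ?_⟩
  have := Measure.isProbabilityMeasure_map (μ := μ) measurable_shiftPerm.aemeasurable
  apply measure_eq_of_cyl
  intro s f
  have hms : MeasurableSet {x : ℤ → Fin 2 | ∀ i ∈ s, x i = f i} := by
    have : {x : ℤ → Fin 2 | ∀ i ∈ s, x i = f i} = ⋂ i ∈ s, (fun x => x i) ⁻¹' {f i} := by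
      ext x; simp
    rw [this]
    exact Finset.measurableSet_biInter _ fun i _ => measurable_pi_apply i (measurableSet_singleton _)
  rw [Measure.map_apply measurable_shiftPerm hms, h]
  have : (shiftPerm ⁻¹' {x : ℤ → Fin 2 | ∀ i ∈ s, x i = f i}) =
      {x : ℤ → Fin 2 | ∀ i ∈ s.map (addRightEmbedding 1), x i = (fun j => f (j - 1)) i} := by
    ext x
    simp [shiftPerm]
  rw [this, h]
  simp

lemma IsBer.word {r : ℝ} (hr : 0 < r) (hr1 : r < 1) {μ : Measure (ℤ → Fin 2)} (h : IsBer r μ)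
    (n : ℕ) (w : Fin n → Fin 2) :
    μ.real {x : ℤ → Fin 2 | ∀ i : Fin n, x (i : ℕ) = w i} = ∏ i, (if w i = 0 then r else 1 - r) := by
  obtain ⟨e, he⟩ : ∃ e : Fin n ↪ ℤ, ∀ i, e i = ((i : ℕ) : ℤ) :=
    ⟨⟨fun i : Fin n => ((i : ℕ) : ℤ), fun a b hab => by simpa [Fin.ext_iff] using hab⟩,
      fun _ => rfl⟩
  have h1 : {x : ℤ → Fin 2 | ∀ i : Fin n, x (i : ℕ) = w i} =
      {x : ℤ → Fin 2 | ∀ i ∈ Finset.univ.map e,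
        x i = (fun j : ℤ => if hj : j.toNat < n then w ⟨j.toNat, hj⟩ else 0) i} := by
    ext x
    simp [he]
  rw [measureReal_def, h1, h, Finset.prod_map, ENNReal.toReal_prod]
  refine Finset.prod_congr rfl fun i _ => ?_
  simp only [he, Int.toNat_natCast, Fin.is_lt, dite_true, Fin.eta]
  split_ifs
  · exact ENNReal.toReal_ofReal hr.le
  · exact ENNReal.toReal_ofReal (by linarith)

lemma IsBer.coord {r : ℝ} (hr : 0 < r) (hr1 : r < 1) {μ : Measure (ℤ → Fin 2)} (h : IsBer r μ)
    (n : ℤ) : ent μ (fun x => x n) = Real.binEntropy r := by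
  have h1 : ∀ a, μ.real ((fun x : ℤ → Fin 2 => x n) ⁻¹' {a}) = if a = 0 then r else 1 - r := by
    intro a
    have : ((fun x : ℤ → Fin 2 => x n) ⁻¹' {a}) =
      {x : ℤ → Fin 2 | ∀ i ∈ ({n} : Finset ℤ), x i = (fun _ => a) i} := by ext x; simp
    rw [this, measureReal_def, h]
    simp only [Finset.prod_singleton]
    split_ifs
    · exact ENNReal.toReal_ofReal hr.le
    · exact ENNReal.toReal_ofReal (by linarith)
  simp [ent, h1, Real.binEntropy_eq_negMulLog_add_negMulLog_one_sub]

lemma ent_comp_mp {Ω α : Type*} [MeasurableSpace Ω] [Fintype α] [MeasurableSpace α]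
    [MeasurableSingletonClass α] (μ : Measure Ω) (T : Ω → Ω) (hT : MeasurePreserving T μ μ)
    (X : Ω → α) (hX : Measurable X) : ent μ (fun ω => X (T ω)) = ent μ X := by
  unfold ent
  refine Finset.sum_congr rfl fun a _ => ?_
  congr 1
  exact hT.measureReal_preimage (hX (measurableSet_singleton a)).nullMeasurableSet

lemma ent_bin {Ω : Type*} [MeasurableSpace Ω] (μ : Measure Ω) [IsProbabilityMeasure μ]
    (X : Ω → Fin 2) (hX : Measurable X) : ent μ X = Real.binEntropy (μ.real (X ⁻¹' {1})) := by
  have : X ⁻¹' {0} = (X ⁻¹' {1})ᶜ := by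
    ext x
    simp only [mem_preimage, mem_singleton_iff, mem_compl_iff]
    generalize X x = a
    revert a; decide
  simp only [ent, Fin.sum_univ_two, this, Real.binEntropy_eq_negMulLog_add_negMulLog_one_sub]
  rw [probReal_compl_eq_one_sub (hX (measurableSet_singleton 1))]
  ring

lemma exists_approx (μ : Measure (ℤ → Fin 2)) [IsProbabilityMeasure μ] (A : Set (ℤ → Fin 2))
    (hA : MeasurableSet A) (ε : ℝ) (hε : 0 < ε) :
    ∃ (s : Finset ℤ) (S : Set (s → Fin 2)), μ.real (symmDiff (cylinder s S) A) < ε := by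
  have hring : IsSetRing (measurableCylinders (fun _ : ℤ => Fin 2)) :=
    ⟨empty_mem_measurableCylinders _, fun _ _ hs ht => union_mem_measurableCylinders hs ht,
      fun _ _ hs ht => sdiff_mem_measurableCylinders hs ht⟩
  obtain ⟨t, ht, hlt⟩ := exists_measure_symmDiff_lt_of_generateFrom_isSetRing (μ := μ) hring
    ⟨{univ}, by simp, by simpa using univ_mem_measurableCylinders (fun _ : ℤ => Fin 2), by simp⟩
    generateFrom_measurableCylinders.symm hA (ε := ENNReal.ofReal ε) (by simpa using hε)
  obtain ⟨s, S, hS, rfl⟩ := (mem_measurableCylinders _).1 ht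
  refine ⟨s, S, ?_⟩
  rw [measureReal_def]
  exact (ENNReal.lt_ofReal_iff_toReal_lt (by finiteness)).1 hlt

lemma factor_le {r r' : ℝ} (hr : 0 < r) (hr1 : r < 1) (hr' : 0 < r') (hr1' : r' < 1)
    {μ μ' : Measure (ℤ → Fin 2)} [IsProbabilityMeasure μ] [IsProbabilityMeasure μ']
    (h : IsBer r μ) (h' : IsBer r' μ') (Φ : (ℤ → Fin 2) → (ℤ → Fin 2)) (hΦ : Measurable Φ)
    (hmap : Measure.map Φ μ = μ') (heq : ∀ᵐ x ∂μ, Φ (shiftPerm x) = shiftPerm (Φ x)) :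
    Real.binEntropy r' ≤ Real.binEntropy r := by
  classical
  have hmp := h.mp
  have hit : ∀ᵐ x ∂μ, ∀ n : ℕ, Φ (shiftPerm^[n] x) = shiftPerm^[n] (Φ x) := by
    rw [ae_all_iff]
    intro n
    induction n with
    | zero => simp
    | succ n ih =>
      filter_upwards [ih, (hmp.iterate n).quasiMeasurePreserving.ae heq] with x h1 h2
      rw [Function.iterate_succ_apply', h2, h1, Function.iterate_succ_apply']
  refine le_of_forall_pos_le_add fun η hη => ?_
  obtain ⟨δ, hδ, hδη⟩ : ∃ δ > 0, ∀ p : ℝ, 0 ≤ p → p < δ → Real.binEntropy p < η := by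
    have hc : Tendsto Real.binEntropy (𝓝 0) (𝓝 0) := by
      simpa using Real.binEntropy_continuous.tendsto 0
    obtain ⟨δ, hδ, hd⟩ := Metric.tendsto_nhds_nhds.1 hc η hη
    refine ⟨δ, hδ, fun p hp hpd => ?_⟩
    have := hd (x := p) (by simpa [abs_of_nonneg hp] using hpd)
    rw [Real.dist_eq, sub_zero] at this
    exact (abs_lt.1 this).2
  have hQm : Measurable fun x => Φ x 0 := (measurable_pi_apply 0).comp hΦ
  obtain ⟨s, S, hS⟩ := exists_approx μ ((fun x => Φ x 0) ⁻¹' {0})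
    (hQm (measurableSet_singleton 0)) δ hδ
  set C : Set (ℤ → Fin 2) := cylinder s S with hC
  have hCm : MeasurableSet C := MeasurableSet.cylinder s (Set.toFinite S).measurableSet
  set q : (ℤ → Fin 2) → Fin 2 := fun x => if x ∈ C then 0 else 1 with hq
  have hqm : Measurable q := Measurable.ite hCm measurable_const measurable_const
  set E : (ℤ → Fin 2) → Fin 2 := fun x => Φ x 0 - q x with hE
  have hEm : Measurable E :=
    (measurable_from_prod_countable_right (f := fun p : Fin 2 × Fin 2 => p.1 - p.2)
      (fun _ => measurable_of_finite _)).comp (hQm.prodMk hqm)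
  have hEent : ent μ E ≤ η := by
    rw [ent_bin μ E hEm]
    refine (hδη _ measureReal_nonneg (lt_of_le_of_lt ?_ hS)).le
    refine measureReal_mono ?_ (by finiteness)
    intro x hx
    simp only [mem_preimage, mem_singleton_iff, hE, hq] at hx
    rw [Set.mem_symmDiff]
    by_cases hxC : x ∈ C
    · left
      refine ⟨hxC, ?_⟩
      simp only [hxC, if_true] at hx
      intro h0
      simp only [mem_preimage, mem_singleton_iff] at h0
      rw [h0] at hx
      revert hx; decide
    · right
      refine ⟨?_, hxC⟩
      simp only [hxC, if_false] at hx
      simp only [mem_preimage, mem_singleton_iff]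
      revert hx
      generalize Φ x 0 = a
      revert a; decide
  obtain ⟨k, hk⟩ : ∃ k : ℕ, ∀ j ∈ s, -(k : ℤ) ≤ j ∧ j ≤ k := by
    refine ⟨s.sup Int.natAbs, fun j hj => ?_⟩
    have := Finset.le_sup (f := Int.natAbs) hj
    omega
  have hTm : ∀ n : ℕ, Measurable (shiftPerm^[n] : (ℤ → Fin 2) → _) :=
    fun n => measurable_shiftPerm.iterate n
  have main : ∀ n : ℕ, n * Real.binEntropy r' ≤
      ((n + 2 * k + 1 : ℕ) : ℝ) * Real.binEntropy r + n * η := by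
    intro n
    set Qn : (ℤ → Fin 2) → Fin n → Fin 2 := fun x i => Φ (shiftPerm^[(i : ℕ)] x) 0 with hQn
    set qn : (ℤ → Fin 2) → Fin n → Fin 2 := fun x i => q (shiftPerm^[(i : ℕ)] x) with hqn
    set En : (ℤ → Fin 2) → Fin n → Fin 2 := fun x i => E (shiftPerm^[(i : ℕ)] x) with hEn
    set Pn : (ℤ → Fin 2) → Fin (n + 2 * k + 1) → Fin 2 := fun x i => x ((i : ℕ) - k) with hPn
    have mq : Measurable qn := measurable_pi_lambda _ fun i => hqm.comp (hTm i)
    have mE : Measurable En := measurable_pi_lambda _ fun i => hEm.comp (hTm i)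
    have mP : Measurable Pn := measurable_pi_lambda _ fun i => measurable_pi_apply _
    have e1 : ent μ Qn = n * Real.binEntropy r' := by
      have hlaw : ∀ w, μ.real (Qn ⁻¹' {w}) = ∏ i, (if w i = 0 then r' else 1 - r') := by
        intro w
        rw [← h'.word hr' hr1' n w, ← hmap, map_measureReal_apply hΦ]
        · refine measureReal_congr ?_
          filter_upwards [hit] with x hx
          apply propext
          change Qn x = w ↔ ∀ i : Fin n, Φ x (i : ℕ) = w i
          rw [funext_iff]
          refine forall_congr' fun i => ?_
          simp only [hQn, hx, shiftPerm_iterate, zero_add]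
        · have : {x : ℤ → Fin 2 | ∀ i : Fin n, x (i : ℕ) = w i} =
              ⋂ i : Fin n, (fun x => x ((i : ℕ) : ℤ)) ⁻¹' {w i} := by
            ext x; simp
          rw [this]
          exact MeasurableSet.iInter fun i => measurable_pi_apply _ (measurableSet_singleton _)
      unfold ent
      simp only [hlaw]
      rw [sum_negMulLog_prod (fun a => if a = 0 then r' else 1 - r') (by simp) n]
      simp [Real.binEntropy_eq_negMulLog_add_negMulLog_one_sub]
    have e2 : ent μ Qn ≤ ent μ (fun x => (qn x, En x)) := by
      apply ent_factor_le μ _ (mq.prodMk mE)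
      intro x y hxy
      rw [Prod.mk.injEq] at hxy
      funext i
      have h1 := congrFun hxy.1 i
      have h2 := congrFun hxy.2 i
      simp only [hqn, hEn, hE] at h1 h2
      rw [h1] at h2
      exact sub_left_injective h2
    have e3 := ent_prod_le μ qn mq En mE
    have e4 : ent μ En ≤ n * η := by
      apply ent_pi_le μ η n (fun i x => E (shiftPerm^[(i : ℕ)] x)) (fun i => hEm.comp (hTm i))
      intro i
      rw [ent_comp_mp μ _ (hmp.iterate i) E hEm]
      exact hEent
    have e5 : ent μ qn ≤ ent μ Pn := by
      apply ent_factor_le μ _ mP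
      intro x y hxy
      funext i
      simp only [hqn, hq, hC, mem_cylinder]
      have : s.restrict (shiftPerm^[(i : ℕ)] x) = s.restrict (shiftPerm^[(i : ℕ)] y) := by
        funext j
        simp only [Finset.restrict, shiftPerm_iterate]
        have hj := hk j j.2
        have hi := i.2
        have := congrFun hxy ⟨((j : ℤ) + i + k).toNat, by omega⟩
        simp only [hPn] at this
        have e : (((((j : ℤ) + i + k).toNat : ℕ) : ℤ) - k) = j + i := by omega
        rwa [e] at this
      simp only [this]
    have e6 : ent μ Pn ≤ ((n + 2 * k + 1 : ℕ) : ℝ) * Real.binEntropy r :=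
      ent_pi_le μ _ _ (fun i x => x ((i : ℕ) - k)) (fun i => measurable_pi_apply _)
        (fun i => (h.coord hr hr1 _).le)
    linarith
  by_contra hcon
  push Not at hcon
  obtain ⟨n, hn⟩ := exists_nat_gt ((2 * k + 1) * Real.binEntropy r /
    (Real.binEntropy r' - (Real.binEntropy r + η)))
  rw [div_lt_iff₀ (by linarith)] at hn
  have := main n
  push_cast at this
  nlinarith

/-- For `r ≠ r'` in `(0, 1/2]`, the Bernoulli shifts of parameters `r` and `r'`
(on the product probability spaces `{0,1}^ℤ`, characterized by their values on cylinder sets)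
are not conjugate. -/
theorem stmt8 (r r' : ℝ) (hr : r ∈ Set.Ioc (0:ℝ) (1/2)) (hr' : r' ∈ Set.Ioc (0:ℝ) (1/2))
    (hne : r ≠ r')
    (μ μ' : Measure (ℤ → Fin 2)) [IsProbabilityMeasure μ] [IsProbabilityMeasure μ']
    (hcyl : ∀ (s : Finset ℤ) (f : ℤ → Fin 2),
      μ {x : ℤ → Fin 2 | ∀ i ∈ s, x i = f i} =
        ∏ i ∈ s, (if f i = 0 then ENNReal.ofReal r else ENNReal.ofReal (1 - r)))
    (hcyl' : ∀ (s : Finset ℤ) (f : ℤ → Fin 2),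
      μ' {x : ℤ → Fin 2 | ∀ i ∈ s, x i = f i} =
        ∏ i ∈ s, (if f i = 0 then ENNReal.ofReal r' else ENNReal.ofReal (1 - r'))) :
    ¬ ∃ Φ : (ℤ → Fin 2) → (ℤ → Fin 2), Measurable Φ ∧
        Measure.map Φ μ = μ' ∧
        (∃ N : Set (ℤ → Fin 2), μ N = 0 ∧ Set.InjOn Φ Nᶜ) ∧
        μ' (Set.range Φ)ᶜ = 0 ∧
        ∀ᵐ x ∂μ, Φ (shiftPerm x) = shiftPerm (Φ x) := by
  have hB : IsBer r μ := hcyl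
  have hB' : IsBer r' μ' := hcyl'
  have hr1 : r < 1 := by have := hr.2; linarith
  have hr1' : r' < 1 := by have := hr'.2; linarith
  rintro ⟨Φ, hΦ, hmap, ⟨N, hN, hinj⟩, -, heq⟩
  have le1 := factor_le hr.1 hr1 hr'.1 hr1' hB hB' Φ hΦ hmap heq
  set S : Set (ℤ → Fin 2) := (toMeasurable μ N)ᶜ with hS
  have hSm : MeasurableSet S := (measurableSet_toMeasurable μ N).compl
  have hSae : ∀ᵐ x ∂μ, x ∈ S := by
    rw [ae_iff]
    simpa [hS] using hN
  have hSinj : Set.InjOn Φ S := hinj.mono (compl_subset_compl.2 (subset_toMeasurable μ N))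
  have hstd : StandardBorelSpace S := hSm.standardBorel
  have hemb : MeasurableEmbedding (S.domRestrict Φ) :=
    (hΦ.comp measurable_subtype_coe).measurableEmbedding hSinj.injective
  obtain ⟨Ψ, hΨ, hΨΦ⟩ := hemb.exists_measurable_extend (g := fun x : S => (x : ℤ → Fin 2))
    measurable_subtype_coe (fun _ => inferInstance)
  have hinv : ∀ x ∈ S, Ψ (Φ x) = x := fun x hx => congrFun hΨΦ ⟨x, hx⟩
  have hmap' : Measure.map Ψ μ' = μ := by
    rw [← hmap, Measure.map_map hΨ hΦ]
    have : (Ψ ∘ Φ) =ᵐ[μ] id := by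
      filter_upwards [hSae] with x hx using hinv x hx
    rw [Measure.map_congr this, Measure.map_id]
  have heq' : ∀ᵐ y ∂μ', Ψ (shiftPerm y) = shiftPerm (Ψ y) := by
    have hms : MeasurableSet {y | Ψ (shiftPerm y) = shiftPerm (Ψ y)} :=
      measurableSet_eq_fun (hΨ.comp measurable_shiftPerm) (measurable_shiftPerm.comp hΨ)
    rw [← hmap, ae_map_iff hΦ.aemeasurable hms]
    filter_upwards [heq, hSae, hB.mp.quasiMeasurePreserving.ae hSae] with x h1 h2 h3
    rw [← h1, hinv _ h3, hinv _ h2]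
  have le2 := factor_le hr'.1 hr1' hr.1 hr1 hB' hB Ψ hΨ hmap' heq'
  refine hne (Real.binEntropy_strictMonoOn.injOn ⟨hr.1.le, ?_⟩ ⟨hr'.1.le, ?_⟩ (le_antisymm le2 le1))
  · have := hr.2; norm_num at this ⊢; exact this
  · have := hr'.2; norm_num at this ⊢; exact this
end

section
/- Let (X, μ) be a σ-finite measure space and H = L²(X × ℝ, μ ⊗ λ, ℂ) with λ Lebesgue measure on ℝ. For μ', ξ ∈ L²(ℝ, ℂ) let Θ_{μ', ξ} be the bounded operator on H given by (Θ_{μ', ξ} F)(x, t) = μ'(t) · ∫_ℝ F(x, r) · conj(ξ(r)) dr. Let (v_n) be a sequence of bounded operators on H with sup_n ‖v_n‖ < ∞ such that for all μ', ξ ∈ L²(ℝ, ℂ), both the commutators [v_n, Θ_{μ', ξ}] and [v_n*, Θ_{μ', ξ}] converge to 0 in the strong operator topology as n → ∞. Fix a unit vector ξ₀ ∈ L²(ℝ, ℂ) and define w_n on L²(X, μ, ℂ) by (w_n g)(x) = ∫_ℝ (v_n (g ⊗ ξ₀))(x, r) · conj(ξ₀(r)) dr, where (g ⊗ ξ₀)(x,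 t) = g(x) ξ₀(t). Then each w_n is bounded with ‖w_n‖ ≤ ‖v_n‖, the fiberwise operator w_n ⊗ 1 on H defined by ((w_n ⊗ 1)F)(·, t) = w_n(F(·, t)) is bounded, and v_n − (w_n ⊗ 1) → 0 and v_n* − (w_n* ⊗ 1) → 0 in the strong operator topology. -/
open MeasureTheory Filter Topology

set_option linter.unusedSectionVars false
section abstractPart
open scoped InnerProductSpace
variable {K L H : Type*} [NormedAddCommGroup K] [InnerProductSpace ℂ K] [CompleteSpace K]
  [NormedAddCommGroup L] [InnerProductSpace ℂ L] [CompleteSpace L]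
  [NormedAddCommGroup H] [InnerProductSpace ℂ H] [CompleteSpace H]

lemma aux_norm (B : K →L[ℂ] L →L[ℂ] H)
    (hB : ∀ g g' ξ ξ', ⟪B g ξ, B g' ξ'⟫_ℂ = ⟪g, g'⟫_ℂ * ⟪ξ, ξ'⟫_ℂ) (g : K) (ξ : L) :
    ‖B g ξ‖ = ‖g‖ * ‖ξ‖ := by
  have h := hB g g ξ ξ
  rw [inner_self_eq_norm_sq_to_K, inner_self_eq_norm_sq_to_K, inner_self_eq_norm_sq_to_K] at h
  have h2 : ‖B g ξ‖ ^ 2 = ‖g‖ ^ 2 * ‖ξ‖ ^ 2 := by exact_mod_cast h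
  rw [← mul_pow] at h2
  exact (pow_left_inj₀ (norm_nonneg _) (by positivity) two_ne_zero).1 h2

lemma aux_amplify (B : K →L[ℂ] L →L[ℂ] H)
    (hB : ∀ g g' ξ ξ', ⟪B g ξ, B g' ξ'⟫_ℂ = ⟪g, g'⟫_ℂ * ⟪ξ, ξ'⟫_ℂ)
    (hd : ∀ F : H, (∀ g ξ, ⟪B g ξ, F⟫_ℂ = 0) → F = 0) (w : K →L[ℂ] K) :
    ∃ W : H →L[ℂ] H, ‖W‖ ≤ ‖w‖ ∧ ∀ g ξ, W (B g ξ) = B (w g) ξ := by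
  classical
  obtain ⟨s, e, -⟩ := exists_hilbertBasis ℂ L
  have hn := aux_norm B hB
  let V : s → (K →ₗᵢ[ℂ] H) := fun i =>
    { toLinearMap := (B.flip (e i)).toLinearMap
      norm_map' := fun g => by
        have := hn g (e i)
        simpa [e.orthonormal.1 i] using this }
  have hV : ∀ i g, V i g = B g (e i) := fun i g => rfl
  have hortho : OrthogonalFamily ℂ (fun _ : s => K) V := by
    intro i j hij g g'
    rw [hV, hV, hB, e.orthonormal.2 hij, mul_zero]
  have hsum : IsHilbertSum ℂ (fun _ : s => K) V := by
    refine IsHilbertSum.mk hortho ?_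
    rw [top_le_iff, Submodule.topologicalClosure_eq_top_iff, Submodule.eq_bot_iff]
    intro F hF
    apply hd
    intro g ξ
    have h1 : ∀ i, ⟪B g (e i), F⟫_ℂ = 0 := fun i =>
      (Submodule.mem_orthogonal _ _).1 hF _
        (Submodule.mem_iSup_of_mem i ⟨g, rfl⟩)
    have h2 : B g ξ ∈ (ℂ ∙ F)ᗮ := by
      have h3 : ξ ∈ (Submodule.span ℂ (Set.range e)).topologicalClosure := by
        rw [e.dense_span]; trivial
      have h4 : (Submodule.span ℂ (Set.range e)).topologicalClosure ≤
          ((ℂ ∙ F)ᗮ).comap (B g).toLinearMap := by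
        apply Submodule.topologicalClosure_minimal
        · rw [Submodule.span_le]
          rintro _ ⟨i, rfl⟩
          exact (Submodule.mem_orthogonal_singleton_iff_inner_left).2 (h1 i)
        · exact (Submodule.isClosed_orthogonal _).preimage (B g).continuous
      exact h4 h3
    exact (Submodule.mem_orthogonal_singleton_iff_inner_left).1 h2
  let Φ := hsum.linearIsometryEquiv
  have hΦ : ∀ F i (x : K), ⟪x, Φ F i⟫_ℂ = ⟪B x (e i), F⟫_ℂ := by
    intro F i x
    have h1 := lp.inner_single_left (𝕜 := ℂ) (G := fun _ : s => K) i x (Φ F)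
    have h2 : Φ (V i x) = lp.single 2 i x := by
      rw [← hsum.linearIsometryEquiv_symm_apply_single x]
      exact Φ.apply_symm_apply _
    rw [← h1, ← h2, Φ.inner_map_map, hV]
  have hΦT : ∀ g ξ i, Φ (B g ξ) i = ⟪e i, ξ⟫_ℂ • g := by
    intro g ξ i
    apply ext_inner_left ℂ
    intro x
    rw [hΦ, hB, inner_smul_right, mul_comm]
  let M := lp.mapCLM (𝕜 := ℂ) 2 (fun _ : s => w) (norm_nonneg w) (fun _ => le_rfl)
  have hM : ‖M‖ ≤ ‖w‖ := lp.norm_mapCLM_le 2 _ _ _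
  refine ⟨(Φ.symm.toContinuousLinearEquiv : _ →L[ℂ] H) ∘L M ∘L (Φ.toContinuousLinearEquiv : H →L[ℂ] _), ?_, ?_⟩
  · refine ContinuousLinearMap.opNorm_le_bound _ (norm_nonneg _) fun F => ?_
    have h1 : ‖Φ.symm (M (Φ F))‖ ≤ ‖w‖ * ‖F‖ := by
      rw [Φ.symm.norm_map]
      refine (M.le_of_opNorm_le hM _).trans ?_
      rw [Φ.norm_map]
    exact h1
  · intro g ξ
    change Φ.symm (M (Φ (B g ξ))) = _
    rw [Φ.symm_apply_eq]
    ext i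
    rw [hΦT]
    change w (Φ (B g ξ) i) = _
    rw [hΦT, map_smul]

lemma aux_conv (B : K →L[ℂ] L →L[ℂ] H)
    (hd : ∀ F : H, (∀ g ξ, ⟪B g ξ, F⟫_ℂ = 0) → F = 0) (A : ℕ → (H →L[ℂ] H)) (D : ℝ)
    (hA : ∀ n, ‖A n‖ ≤ D) (hT : ∀ g ξ, Tendsto (fun n => ‖A n (B g ξ)‖) atTop (𝓝 0)) (F : H) :
    Tendsto (fun n => ‖A n F‖) atTop (𝓝 0) := by
  have hD : 0 ≤ D := (norm_nonneg _).trans (hA 0)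
  let S : Submodule ℂ H :=
    { carrier := {F | Tendsto (fun n => A n F) atTop (𝓝 0)}
      zero_mem' := by simp
      add_mem' := fun {a b} ha hb => by
        have := Tendsto.add (Set.mem_ofPred_eq ▸ ha) (Set.mem_ofPred_eq ▸ hb)
        simpa using this
      smul_mem' := fun c a ha => by
        have := Tendsto.const_smul (Set.mem_ofPred_eq ▸ ha) c
        simpa using this }
  have hS : ∀ F, F ∈ S ↔ Tendsto (fun n => A n F) atTop (𝓝 0) := fun F => Iff.rfl
  have hdense : S.topologicalClosure = ⊤ := by
    rw [Submodule.topologicalClosure_eq_top_iff, Submodule.eq_bot_iff]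
    intro F hF
    apply hd
    intro g ξ
    exact (Submodule.mem_orthogonal _ _).1 hF _ ((hS _).2 (tendsto_zero_iff_norm_tendsto_zero.2 (hT g ξ)))
  have hF : F ∈ closure (S : Set H) := by
    have : F ∈ S.topologicalClosure := by rw [hdense]; trivial
    exact this
  rw [← tendsto_zero_iff_norm_tendsto_zero]
  rw [Metric.tendsto_atTop]
  intro ε hε
  obtain ⟨G, hG, hFG⟩ := Metric.mem_closure_iff.1 hF (ε / (2 * (D + 1))) (by positivity)
  obtain ⟨N, hN⟩ := Metric.tendsto_atTop.1 ((hS G).1 hG) (ε / 2) (by positivity)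
  refine ⟨N, fun n hn => ?_⟩
  have h1 := hN n hn
  rw [dist_zero_right] at h1 ⊢
  have h2 : A n F = A n (F - G) + A n G := by simp
  have h3 : ‖A n (F - G)‖ ≤ D * ‖F - G‖ := (A n).le_of_opNorm_le (hA n) _
  rw [dist_eq_norm] at hFG
  have h4 : D * ‖F - G‖ ≤ ε / 2 := by
    calc D * ‖F - G‖ ≤ (D + 1) * (ε / (2 * (D + 1))) := by gcongr; linarith
      _ = ε / 2 := by field_simp
  rw [h2]
  linarith [norm_add_le (A n (F - G)) (A n G)]

lemma aux_main (B : K →L[ℂ] L →L[ℂ] H)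
    (hB : ∀ g g' ξ ξ', ⟪B g ξ, B g' ξ'⟫_ℂ = ⟪g, g'⟫_ℂ * ⟪ξ, ξ'⟫_ℂ)
    (hd : ∀ F : H, (∀ g ξ, ⟪B g ξ, F⟫_ℂ = 0) → F = 0)
    (v : ℕ → (H →L[ℂ] H)) (hbdd : ∃ C : ℝ, ∀ n : ℕ, ‖v n‖ ≤ C)
    (hcomm : ∀ μ' ξ F, Tendsto (fun n : ℕ =>
      ‖v n (B ((B.flip ξ).adjoint F) μ') - B ((B.flip ξ).adjoint (v n F)) μ'‖) atTop (𝓝 0))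
    (hcomm' : ∀ μ' ξ F, Tendsto (fun n : ℕ =>
      ‖(v n).adjoint (B ((B.flip ξ).adjoint F) μ') -
        B ((B.flip ξ).adjoint ((v n).adjoint F)) μ'‖) atTop (𝓝 0))
    (ξ₀ : L) (hξ₀ : ‖ξ₀‖ = 1) :
    ∃ w : ℕ → (K →L[ℂ] K),
      (∀ n g, w n g = (B.flip ξ₀).adjoint (v n (B g ξ₀))) ∧
      (∀ n, ‖w n‖ ≤ ‖v n‖) ∧
      ∃ W : ℕ → (H →L[ℂ] H),
        (∀ n g ξ, W n (B g ξ) = B (w n g) ξ) ∧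
        (∀ F, Tendsto (fun n : ℕ => ‖v n F - W n F‖) atTop (𝓝 0)) ∧
        (∀ F, Tendsto (fun n : ℕ => ‖(v n).adjoint F - (W n).adjoint F‖) atTop (𝓝 0)) := by
  have hn := aux_norm B hB
  obtain ⟨C, hC⟩ := hbdd
  have hS : ‖B.flip ξ₀‖ ≤ 1 := by
    refine ContinuousLinearMap.opNorm_le_bound _ zero_le_one fun g => ?_
    simp [hn, hξ₀]
  have hS' : ‖(B.flip ξ₀).adjoint‖ ≤ 1 := by
    rw [LinearIsometryEquiv.norm_map]; exact hS
  have hPT : ∀ ξ g ξ', (B.flip ξ).adjoint (B g ξ') = inner ℂ ξ ξ' • g := by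
    intro ξ g ξ'
    apply ext_inner_left ℂ
    intro x
    rw [ContinuousLinearMap.adjoint_inner_right, ContinuousLinearMap.flip_apply, hB,
      inner_smul_right, mul_comm]
  let w : ℕ → (K →L[ℂ] K) := fun n => (B.flip ξ₀).adjoint ∘L v n ∘L B.flip ξ₀
  have hw : ∀ n g, w n g = (B.flip ξ₀).adjoint (v n (B g ξ₀)) := fun n g => rfl
  have hwn : ∀ n, ‖w n‖ ≤ ‖v n‖ := fun n => by
    calc ‖w n‖ ≤ ‖(B.flip ξ₀).adjoint‖ * (‖v n‖ * ‖B.flip ξ₀‖) :=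
          (ContinuousLinearMap.opNorm_comp_le _ _).trans
            (by gcongr; exact ContinuousLinearMap.opNorm_comp_le _ _)
      _ ≤ 1 * (‖v n‖ * 1) := by gcongr
      _ = ‖v n‖ := by ring
  have hwa : ∀ n g, (w n).adjoint g = (B.flip ξ₀).adjoint ((v n).adjoint (B g ξ₀)) := by
    intro n g
    apply ext_inner_left ℂ
    intro x
    rw [ContinuousLinearMap.adjoint_inner_right, hw, ContinuousLinearMap.adjoint_inner_left,
      ContinuousLinearMap.adjoint_inner_right, ContinuousLinearMap.adjoint_inner_right]
    rfl
  choose W hWn hW using fun n => aux_amplify B hB hd (w n)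
  have hWa : ∀ n g ξ, (W n).adjoint (B g ξ) = B ((w n).adjoint g) ξ := by
    intro n g ξ
    rw [← sub_eq_zero]
    apply hd
    intro g' ξ'
    rw [inner_sub_right, ContinuousLinearMap.adjoint_inner_right, hW, hB, hB,
      ContinuousLinearMap.adjoint_inner_right, sub_self]
  refine ⟨w, hw, hwn, W, hW, ?_, ?_⟩
  · refine aux_conv B hd (fun n => v n - W n) (C + C) (fun n => ?_) (fun g ξ => ?_)
    · exact (norm_sub_le _ _).trans (add_le_add (hC n) (((hWn n).trans (hwn n)).trans (hC n)))
    · have := hcomm ξ ξ₀ (B g ξ₀)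
      simpa [hPT, hξ₀, hW, hw] using this
  · refine aux_conv B hd (fun n => (v n).adjoint - (W n).adjoint) (C + C)
      (fun n => ?_) (fun g ξ => ?_)
    · refine (norm_sub_le _ _).trans ?_
      rw [LinearIsometryEquiv.norm_map, LinearIsometryEquiv.norm_map]
      exact (add_le_add (hC n) (((hWn n).trans (hwn n)).trans (hC n)))
    · have := hcomm' ξ ξ₀ (B g ξ₀)
      simpa [hPT, hξ₀, hWa, hwa] using this
end abstractPart

section concretePart
open scoped InnerProductSpace
variable {X : Type*} [MeasurableSpace X] (μ : Measure X) [SigmaFinite μ]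
  (T : Lp ℂ 2 μ → Lp ℂ 2 (volume : Measure ℝ) → Lp ℂ 2 (μ.prod (volume : Measure ℝ)))

lemma ae_fst {f g : X → ℂ} (h : f =ᵐ[μ] g) :
    (fun p : X × ℝ => f p.1) =ᵐ[μ.prod (volume : Measure ℝ)] fun p => g p.1 :=
  Measure.quasiMeasurePreserving_fst.ae_eq_comp h

lemma ae_snd {f g : ℝ → ℂ} (h : f =ᵐ[volume] g) :
    (fun p : X × ℝ => f p.2) =ᵐ[μ.prod (volume : Measure ℝ)] fun p => g p.2 :=
  Measure.quasiMeasurePreserving_snd.ae_eq_comp h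

lemma T_inner
  (hT : ∀ (g : Lp ℂ 2 μ) (ξ : Lp ℂ 2 (volume : Measure ℝ)),
      (T g ξ : X × ℝ → ℂ) =ᵐ[μ.prod (volume : Measure ℝ)]
        fun p => (g : X → ℂ) p.1 * (ξ : ℝ → ℂ) p.2)
    (g g' : Lp ℂ 2 μ) (ξ ξ' : Lp ℂ 2 (volume : Measure ℝ)) :
    ⟪T g ξ, T g' ξ'⟫_ℂ = ⟪g, g'⟫_ℂ * ⟪ξ, ξ'⟫_ℂ := by
  rw [L2.inner_def, L2.inner_def, L2.inner_def, ← integral_prod_mul]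
  apply integral_congr_ae
  filter_upwards [hT g ξ, hT g' ξ'] with p h1 h2
  rw [h1, h2]
  simp only [RCLike.inner_apply, map_mul]
  ring

lemma T_bilin
  (hT : ∀ (g : Lp ℂ 2 μ) (ξ : Lp ℂ 2 (volume : Measure ℝ)),
      (T g ξ : X × ℝ → ℂ) =ᵐ[μ.prod (volume : Measure ℝ)]
        fun p => (g : X → ℂ) p.1 * (ξ : ℝ → ℂ) p.2)
    : ∃ B : Lp ℂ 2 μ →L[ℂ] Lp ℂ 2 (volume : Measure ℝ) →L[ℂ]
    Lp ℂ 2 (μ.prod (volume : Measure ℝ)), ∀ g ξ, B g ξ = T g ξ := by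
  let B₀ : Lp ℂ 2 μ →ₗ[ℂ] Lp ℂ 2 (volume : Measure ℝ) →ₗ[ℂ]
      Lp ℂ 2 (μ.prod (volume : Measure ℝ)) := LinearMap.mk₂ ℂ T
    (fun g g' ξ => by
      apply Lp.ext
      filter_upwards [hT (g + g') ξ, hT g ξ, hT g' ξ, Lp.coeFn_add (T g ξ) (T g' ξ),
        ae_fst μ (Lp.coeFn_add g g')] with p h1 h2 h3 h4 h5
      rw [h1, h4, Pi.add_apply, h2, h3, h5, Pi.add_apply, add_mul])
    (fun c g ξ => by
      apply Lp.ext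
      filter_upwards [hT (c • g) ξ, hT g ξ, Lp.coeFn_smul c (T g ξ),
        ae_fst μ (Lp.coeFn_smul c g)] with p h1 h2 h4 h5
      rw [h1, h4, Pi.smul_apply, h2, h5, Pi.smul_apply, smul_eq_mul, smul_eq_mul, mul_assoc])
    (fun g ξ ξ' => by
      apply Lp.ext
      filter_upwards [hT g (ξ + ξ'), hT g ξ, hT g ξ', Lp.coeFn_add (T g ξ) (T g ξ'),
        ae_snd μ (Lp.coeFn_add ξ ξ')] with p h1 h2 h3 h4 h5
      rw [h1, h4, Pi.add_apply, h2, h3, h5, Pi.add_apply, mul_add])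
    (fun c g ξ => by
      apply Lp.ext
      filter_upwards [hT g (c • ξ), hT g ξ, Lp.coeFn_smul c (T g ξ),
        ae_snd μ (Lp.coeFn_smul c ξ)] with p h1 h2 h4 h5
      rw [h1, h4, Pi.smul_apply, h2, h5, Pi.smul_apply, smul_eq_mul, smul_eq_mul]
      ring)
  refine ⟨B₀.mkContinuous₂ 1 fun g ξ => ?_, fun g ξ => rfl⟩
  have h := T_inner μ T hT g g ξ ξ
  rw [inner_self_eq_norm_sq_to_K, inner_self_eq_norm_sq_to_K, inner_self_eq_norm_sq_to_K] at h
  have h2 : ‖T g ξ‖ ^ 2 = ‖g‖ ^ 2 * ‖ξ‖ ^ 2 := by exact_mod_cast h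
  rw [← mul_pow] at h2
  rw [one_mul]
  exact ((pow_left_inj₀ (norm_nonneg _) (by positivity) two_ne_zero).1 h2).le

lemma T_ind_left
  (hT : ∀ (g : Lp ℂ 2 μ) (ξ : Lp ℂ 2 (volume : Measure ℝ)),
      (T g ξ : X × ℝ → ℂ) =ᵐ[μ.prod (volume : Measure ℝ)]
        fun p => (g : X → ℂ) p.1 * (ξ : ℝ → ℂ) p.2)
    {s : Set X} (hs : MeasurableSet s) (hμs : μ s ≠ ⊤)
    (ξ : Lp ℂ 2 (volume : Measure ℝ)) (F : Lp ℂ 2 (μ.prod (volume : Measure ℝ))) :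
    IntegrableOn (fun p : X × ℝ => (F : X × ℝ → ℂ) p * (starRingEnd ℂ) ((ξ : ℝ → ℂ) p.2))
      (s ×ˢ Set.univ) (μ.prod volume) ∧
    ⟪T (indicatorConstLp 2 hs hμs 1) ξ, F⟫_ℂ = ∫ p in s ×ˢ Set.univ,
      (F : X × ℝ → ℂ) p * (starRingEnd ℂ) ((ξ : ℝ → ℂ) p.2) ∂(μ.prod volume) := by
  have h1 : (fun p => ⟪(T (indicatorConstLp 2 hs hμs 1) ξ : X × ℝ → ℂ) p, (F : X × ℝ → ℂ) p⟫_ℂ)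
      =ᵐ[μ.prod volume] (s ×ˢ Set.univ).indicator
        (fun p : X × ℝ => (F : X × ℝ → ℂ) p * (starRingEnd ℂ) ((ξ : ℝ → ℂ) p.2)) := by
    filter_upwards [hT (indicatorConstLp 2 hs hμs 1) ξ,
      ae_fst μ (indicatorConstLp_coeFn (p := 2) (hs := hs) (hμs := hμs) (c := (1 : ℂ)))]
      with p h1 h2
    rw [h1, h2]
    by_cases hp : p.1 ∈ s
    · have : p ∈ s ×ˢ (Set.univ : Set ℝ) := ⟨hp, trivial⟩
      simp [this, hp]
    · have : p ∉ s ×ˢ (Set.univ : Set ℝ) := fun h => hp h.1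
      simp [this, hp]
  have hm : MeasurableSet (s ×ˢ (Set.univ : Set ℝ)) := hs.prod MeasurableSet.univ
  constructor
  · rw [← integrable_indicator_iff hm]
    exact (L2.integrable_inner (𝕜 := ℂ) _ F).congr h1
  · rw [L2.inner_def, integral_congr_ae h1, integral_indicator hm]

lemma T_adjoint
  (hT : ∀ (g : Lp ℂ 2 μ) (ξ : Lp ℂ 2 (volume : Measure ℝ)),
      (T g ξ : X × ℝ → ℂ) =ᵐ[μ.prod (volume : Measure ℝ)]
        fun p => (g : X → ℂ) p.1 * (ξ : ℝ → ℂ) p.2)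
    (B : Lp ℂ 2 μ →L[ℂ] Lp ℂ 2 (volume : Measure ℝ) →L[ℂ]
    Lp ℂ 2 (μ.prod (volume : Measure ℝ))) (hB : ∀ g ξ, B g ξ = T g ξ)
    (ξ : Lp ℂ 2 (volume : Measure ℝ)) (F : Lp ℂ 2 (μ.prod (volume : Measure ℝ))) :
    ((B.flip ξ).adjoint F : X → ℂ) =ᵐ[μ]
      fun x => ∫ r : ℝ, (F : X × ℝ → ℂ) (x, r) * (starRingEnd ℂ) ((ξ : ℝ → ℂ) r) ∂volume := by
  have key : ∀ s : Set X, (μ.prod (volume : Measure ℝ)).restrict (s ×ˢ Set.univ) =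
      (μ.restrict s).prod volume := fun s => by
    rw [← Measure.prod_restrict, Measure.restrict_univ]
  apply ae_eq_of_forall_setIntegral_eq_of_sigmaFinite
  · intro s hs hμs
    exact integrableOn_Lp_of_measure_ne_top _ (by norm_num) hμs.ne
  · intro s hs hμs
    have h := (T_ind_left μ T hT hs hμs.ne ξ F).1
    rw [IntegrableOn, key] at h
    exact h.integral_prod_left
  · intro s hs hμs
    obtain ⟨h, h'⟩ := T_ind_left μ T hT hs hμs.ne ξ F
    rw [IntegrableOn, key] at h
    rw [key, integral_prod _ h] at h'
    rw [← h', ← L2.inner_indicatorConstLp_one (𝕜 := ℂ) hs hμs.ne,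
      ContinuousLinearMap.adjoint_inner_right, ContinuousLinearMap.flip_apply, hB]

lemma T_dense
  (hT : ∀ (g : Lp ℂ 2 μ) (ξ : Lp ℂ 2 (volume : Measure ℝ)),
      (T g ξ : X × ℝ → ℂ) =ᵐ[μ.prod (volume : Measure ℝ)]
        fun p => (g : X → ℂ) p.1 * (ξ : ℝ → ℂ) p.2)
    (F : Lp ℂ 2 (μ.prod (volume : Measure ℝ)))
    (hF : ∀ g ξ, ⟪T g ξ, F⟫_ℂ = 0) : F = 0 := by
  have rect : ∀ (s : Set X) (t : Set ℝ), MeasurableSet s → MeasurableSet t → μ s ≠ ⊤ →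
      volume t ≠ ⊤ → ∫ p in s ×ˢ t, (F : X × ℝ → ℂ) p ∂(μ.prod volume) = 0 := by
    intro s t hs ht hμs hνt
    have h := (T_ind_left μ T hT hs hμs (indicatorConstLp 2 ht hνt 1) F).2
    rw [hF] at h
    have h2 : (fun p : X × ℝ => (F : X × ℝ → ℂ) p *
        (starRingEnd ℂ) ((indicatorConstLp 2 ht hνt (1 : ℂ) : ℝ → ℂ) p.2))
        =ᵐ[μ.prod volume] (Set.univ ×ˢ t).indicator (F : X × ℝ → ℂ) := by
      filter_upwards [ae_snd μ
        (indicatorConstLp_coeFn (p := 2) (hs := ht) (hμs := hνt) (c := (1 : ℂ)))] with p h1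
      rw [h1]
      by_cases hp : p.2 ∈ t
      · have : p ∈ (Set.univ : Set X) ×ˢ t := ⟨trivial, hp⟩
        simp [this, hp]
      · have : p ∉ (Set.univ : Set X) ×ˢ t := fun h => hp h.2
        simp [this, hp]
    rw [integral_congr_ae (ae_restrict_of_ae h2),
      setIntegral_indicator (MeasurableSet.univ.prod ht), Set.prod_inter_prod, Set.inter_univ,
      Set.univ_inter] at h
    exact h.symm
  have loc : ∀ (s : Set X) (t : Set ℝ), MeasurableSet s → MeasurableSet t → μ s ≠ ⊤ →
      volume t ≠ ⊤ → (F : X × ℝ → ℂ) =ᵐ[(μ.prod volume).restrict (s ×ˢ t)] 0 := by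
    intro s t hs ht hμs hνt
    have hfin : (μ.prod (volume : Measure ℝ)) (s ×ˢ t) ≠ ⊤ := by
      rw [Measure.prod_prod]; exact ENNReal.mul_ne_top hμs hνt
    have hint : Integrable (F : X × ℝ → ℂ) ((μ.prod volume).restrict (s ×ˢ t)) :=
      integrableOn_Lp_of_measure_ne_top _ (by norm_num) hfin
    refine hint.ae_eq_zero_of_forall_setIntegral_eq_zero fun E hE _ => ?_
    induction E, hE using MeasurableSpace.induction_on_inter generateFrom_prod.symm
      isPiSystem_prod with
    | empty => simp
    | basic E hE =>
      obtain ⟨a, ha, b, hb, rfl⟩ := hE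
      simp only [Set.mem_ofPred_eq] at ha hb
      rw [Measure.restrict_restrict (ha.prod hb), Set.prod_inter_prod]
      exact rect _ _ (ha.inter hs) (hb.inter ht)
        (measure_ne_top_of_subset Set.inter_subset_right hμs)
        (measure_ne_top_of_subset Set.inter_subset_right hνt)
    | compl E hE ih =>
      have h0 := integral_add_compl hE hint
      rw [rect s t hs ht hμs hνt] at h0
      have h1 := ih (by
        rw [Measure.restrict_apply hE]
        exact (measure_mono Set.inter_subset_right).trans_lt hfin.lt_top)
      rw [h1, zero_add] at h0
      exact h0
    | iUnion f hd hf ih =>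
      rw [integral_iUnion hf hd hint.integrableOn]
      have : ∀ i, ∫ p in f i, (F : X × ℝ → ℂ) p ∂((μ.prod volume).restrict (s ×ˢ t)) = 0 :=
        fun i => ih i (by
          rw [Measure.restrict_apply (hf i)]
          exact (measure_mono Set.inter_subset_right).trans_lt hfin.lt_top)
      simp [this]
  have hU : (⋃ n : ℕ × ℕ, spanningSets μ n.1 ×ˢ spanningSets (volume : Measure ℝ) n.2) =
      Set.univ := by
    rw [Set.iUnion_prod, iUnion_spanningSets, iUnion_spanningSets, Set.univ_prod_univ]
  rw [Lp.eq_zero_iff_ae_eq_zero]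
  have := (ae_eq_restrict_iUnion_iff (μ := μ.prod (volume : Measure ℝ))
    (fun n : ℕ × ℕ => spanningSets μ n.1 ×ˢ spanningSets (volume : Measure ℝ) n.2)
    (F : X × ℝ → ℂ) 0).2 fun n => loc _ _ (measurableSet_spanningSets _ _)
      (measurableSet_spanningSets _ _) (measure_spanningSets_lt_top _ _).ne
      (measure_spanningSets_lt_top _ _).ne
  rwa [hU, Measure.restrict_univ] at this

end concretePart

/-- Let `(X, μ)` be a σ-finite measure space and `H = L²(X × ℝ)`.  Let
`Θ μ' ξ` denote the amplification `1 ⊗ (h ↦ ⟨h, ξ⟩ μ')` of a rank-one operator of `L²(ℝ)`,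
i.e. `(Θ μ' ξ F)(x, t) = μ'(t) ∫ F(x, r) conj(ξ(r)) dr`, and let `T g ξ` denote the elementary
tensor `(g ⊗ ξ)(x, t) = g(x) ξ(t)` in `H`.  If `(v_n)` is a uniformly bounded sequence of
operators on `H` such that `[v_n, Θ μ' ξ] → 0` and `[v_n*, Θ μ' ξ] → 0` strongly for all
`μ', ξ ∈ L²(ℝ)`, and `ξ₀` is a unit vector of `L²(ℝ)`, then the compressions
`(w_n g)(x) = ∫ (v_n (g ⊗ ξ₀))(x, r) conj(ξ₀(r)) dr` are bounded operators on `L²(X, μ)` with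
`‖w_n‖ ≤ ‖v_n‖`, the fiberwise operators `w_n ⊗ 1` (determined by
`(w_n ⊗ 1)(g ⊗ ξ) = (w_n g) ⊗ ξ`) are bounded on `H`, and `v_n - w_n ⊗ 1 → 0` and
`v_n* - w_n* ⊗ 1 → 0` in the strong operator topology. -/
theorem stmt12 {X : Type*} [MeasurableSpace X] (μ : Measure X) [SigmaFinite μ]
    (Θ : Lp ℂ 2 (volume : Measure ℝ) → Lp ℂ 2 (volume : Measure ℝ) →
      (Lp ℂ 2 (μ.prod (volume : Measure ℝ)) →L[ℂ] Lp ℂ 2 (μ.prod (volume : Measure ℝ))))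
    (hΘ : ∀ (μ' ξ : Lp ℂ 2 (volume : Measure ℝ))
        (F : Lp ℂ 2 (μ.prod (volume : Measure ℝ))),
      (Θ μ' ξ F : X × ℝ → ℂ) =ᵐ[μ.prod (volume : Measure ℝ)]
        fun p => (μ' : ℝ → ℂ) p.2 *
          ∫ r : ℝ, (F : X × ℝ → ℂ) (p.1, r) * (starRingEnd ℂ) ((ξ : ℝ → ℂ) r) ∂volume)
    (v : ℕ → (Lp ℂ 2 (μ.prod (volume : Measure ℝ)) →L[ℂ] Lp ℂ 2 (μ.prod (volume : Measure ℝ))))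
    (hbdd : ∃ C : ℝ, ∀ n : ℕ, ‖v n‖ ≤ C)
    (hcomm : ∀ (μ' ξ : Lp ℂ 2 (volume : Measure ℝ))
        (F : Lp ℂ 2 (μ.prod (volume : Measure ℝ))),
      Tendsto (fun n : ℕ => ‖v n (Θ μ' ξ F) - Θ μ' ξ (v n F)‖) atTop (𝓝 0))
    (hcomm' : ∀ (μ' ξ : Lp ℂ 2 (volume : Measure ℝ))
        (F : Lp ℂ 2 (μ.prod (volume : Measure ℝ))),
      Tendsto (fun n : ℕ =>
        ‖ContinuousLinearMap.adjoint (v n) (Θ μ' ξ F) -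
          Θ μ' ξ (ContinuousLinearMap.adjoint (v n) F)‖) atTop (𝓝 0))
    (ξ₀ : Lp ℂ 2 (volume : Measure ℝ)) (hξ₀ : ‖ξ₀‖ = 1)
    (T : Lp ℂ 2 μ → Lp ℂ 2 (volume : Measure ℝ) → Lp ℂ 2 (μ.prod (volume : Measure ℝ)))
    (hT : ∀ (g : Lp ℂ 2 μ) (ξ : Lp ℂ 2 (volume : Measure ℝ)),
      (T g ξ : X × ℝ → ℂ) =ᵐ[μ.prod (volume : Measure ℝ)]
        fun p => (g : X → ℂ) p.1 * (ξ : ℝ → ℂ) p.2) :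
    ∃ w : ℕ → (Lp ℂ 2 μ →L[ℂ] Lp ℂ 2 μ),
      (∀ (n : ℕ) (g : Lp ℂ 2 μ), (w n g : X → ℂ) =ᵐ[μ]
        fun x => ∫ r : ℝ, (v n (T g ξ₀) : X × ℝ → ℂ) (x, r) *
          (starRingEnd ℂ) ((ξ₀ : ℝ → ℂ) r) ∂volume) ∧
      (∀ n : ℕ, ‖w n‖ ≤ ‖v n‖) ∧
      ∃ W : ℕ → (Lp ℂ 2 (μ.prod (volume : Measure ℝ)) →L[ℂ]
          Lp ℂ 2 (μ.prod (volume : Measure ℝ))),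
        (∀ (n : ℕ) (g : Lp ℂ 2 μ) (ξ : Lp ℂ 2 (volume : Measure ℝ)),
          W n (T g ξ) = T (w n g) ξ) ∧
        (∀ F : Lp ℂ 2 (μ.prod (volume : Measure ℝ)),
          Tendsto (fun n : ℕ => ‖v n F - W n F‖) atTop (𝓝 0)) ∧
        (∀ F : Lp ℂ 2 (μ.prod (volume : Measure ℝ)),
          Tendsto (fun n : ℕ => ‖ContinuousLinearMap.adjoint (v n) F -
            ContinuousLinearMap.adjoint (W n) F‖) atTop (𝓝 0)) := by
  obtain ⟨B, hB⟩ := T_bilin μ T hT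
  have hadj := T_adjoint μ T hT B hB
  have hΘB : ∀ μ' ξ F, Θ μ' ξ F = B ((B.flip ξ).adjoint F) μ' := by
    intro μ' ξ F
    rw [hB]
    apply Lp.ext
    filter_upwards [hΘ μ' ξ F, hT ((B.flip ξ).adjoint F) μ', ae_fst μ (hadj ξ F)] with p h1 h2 h3
    rw [h1, h2, h3, mul_comm]
  obtain ⟨w, h1, h2, W, h3, h4, h5⟩ := aux_main B
    (fun g g' ξ ξ' => by rw [hB, hB]; exact T_inner μ T hT g g' ξ ξ')
    (fun F hF => T_dense μ T hT F fun g ξ => by rw [← hB]; exact hF g ξ)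
    v hbdd (fun μ' ξ F => by simpa only [hΘB] using hcomm μ' ξ F)
    (fun μ' ξ F => by simpa only [hΘB] using hcomm' μ' ξ F) ξ₀ hξ₀
  refine ⟨w, fun n g => ?_, h2, W, fun n g ξ => ?_, h4, h5⟩
  · rw [h1, hB]
    exact hadj ξ₀ _
  · rw [← hB, ← hB, h3]
end

section
/- Let H be a complex Hilbert space and M a von Neumann algebra on H which is a factor, i.e. every element of M commuting with all elements of M is a complex scalar multiple of the identity. Let β : M → M be a *-algebra automorphism of M, and suppose there exists a ∈ M with a ≠ 0 such that β(y) · a = a · y for all y ∈ M. Then β is inner: there exists a unitary u ∈ M such that β(y) = u y u* for all y ∈ M. -/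
/-- Let `M` be a von Neumann algebra on a complex Hilbert space `H` which is a
factor (every element of `M` commuting with all of `M` is a scalar multiple of the identity).
If `β` is a `*`-algebra automorphism of `M` and there is a nonzero `a ∈ M` with
`β(y) * a = a * y` for all `y ∈ M`, then `β` is inner: `β(y) = u * y * u*` for a unitary
`u ∈ M`. -/
theorem stmt13 {H : Type*} [NormedAddCommGroup H] [InnerProductSpace ℂ H] [CompleteSpace H]
    (M : VonNeumannAlgebra H)
    (hfactor : ∀ x : M.toStarSubalgebra, (∀ y : M.toStarSubalgebra, x * y = y * x) →
      ∃ c : ℂ, (x : H →L[ℂ] H) = c • (1 : H →L[ℂ] H))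
    (β : M.toStarSubalgebra ≃⋆ₐ[ℂ] M.toStarSubalgebra)
    (a : M.toStarSubalgebra) (ha : a ≠ 0)
    (hab : ∀ y : M.toStarSubalgebra, (β y) * a = a * y) :
    ∃ u : M.toStarSubalgebra, star u * u = 1 ∧ u * star u = 1 ∧
      ∀ y : M.toStarSubalgebra, β y = u * y * star u := by
  have hab' : ∀ y : M.toStarSubalgebra, star a * β y = y * star a := by
    intro y
    have h := congrArg star (hab (star y))
    simpa [map_star] using h
  obtain ⟨c, hc⟩ := hfactor (star a * a) (fun y => by
    rw [mul_assoc, ← hab, ← mul_assoc, hab', mul_assoc])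
  obtain ⟨d, hd⟩ := hfactor (a * star a) (fun y => by
    obtain ⟨z, rfl⟩ : ∃ z, β z = y := β.surjective y
    rw [mul_assoc, hab', ← mul_assoc, ← hab, mul_assoc])
  have hc1 : star a * a = c • (1 : M.toStarSubalgebra) := Subtype.ext hc
  have hd1 : a * star a = d • (1 : M.toStarSubalgebra) := Subtype.ext hd
  have hdc : d = c := by
    have h : d • a = c • a := by
      have h1 : (a * star a) * a = a * (star a * a) := mul_assoc _ _ _
      rw [hc1, hd1] at h1
      simpa using h1
    exact smul_left_injective ℂ ha h
  subst hdc
  have ha' : (a : H →L[ℂ] H) ≠ 0 := fun h => ha (Subtype.ext h)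
  obtain ⟨x, hx⟩ : ∃ x, (a : H →L[ℂ] H) x ≠ 0 := by
    by_contra! h
    exact ha' (ContinuousLinearMap.ext h)
  have hx0 : x ≠ 0 := by
    rintro rfl
    simp at hx
  have hxn : (‖x‖ : ℂ) ≠ 0 := by simpa using hx0
  have han : (‖(a : H →L[ℂ] H) x‖ : ℂ) ≠ 0 := by simpa using hx
  have key : d * (‖x‖ : ℂ) ^ 2 = (‖(a : H →L[ℂ] H) x‖ : ℂ) ^ 2 := by
    have h1 : (star (a : H →L[ℂ] H)) ((a : H →L[ℂ] H) x) = d • x := by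
      have := congrArg (fun T : H →L[ℂ] H => T x) hc
      simpa using this
    have h2 := congrArg (fun v => inner ℂ x v) h1
    simp only [ContinuousLinearMap.star_eq_adjoint, ContinuousLinearMap.adjoint_inner_right,
      inner_smul_right, inner_self_eq_norm_sq_to_K] at h2
    exact h2.symm
  set r : ℝ := ‖x‖ / ‖(a : H →L[ℂ] H) x‖ with hr
  have hrd : (r : ℂ) * (r : ℂ) * d = 1 := by
    rw [hr]
    push_cast
    field_simp
    linear_combination key
  have hu2 : ((r : ℂ) • a) * star ((r : ℂ) • a) = 1 := by
    rw [star_smul, smul_mul_smul_comm, hd1, smul_smul]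
    simp [hrd]
  refine ⟨(r : ℂ) • a, ?_, hu2, fun y => ?_⟩
  · rw [star_smul, smul_mul_smul_comm, hc1, smul_smul]
    simp [hrd]
  · have h : ((r : ℂ) • a) * y = β y * ((r : ℂ) • a) := by
      rw [smul_mul_assoc, mul_smul_comm, hab]
    rw [h, mul_assoc, hu2, mul_one]
end
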